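/- (Minkowski-type theorem, sufficiency.) Let p : Sⁿ → ℝ be a positive bounded function such that whenever x, y, y₁, …, y_k ∈ Sⁿ and α₁, …, α_k ≥ 0 with Σᵢαᵢ > 0 satisfy x − y = Σ_{i=1}^{k} αᵢ(x − yᵢ) with the vectors x − y₁, …, x − y_k linearly independent, one has p(y) ≤ Σ_{i=1}^{k} αᵢ p(yᵢ). Then B := {X ∈ ℝ^{n+1} : ‖X‖ − ⟨X,y⟩ ≤ p(y) for all y ∈ Sⁿ} is compact with the origin in its interior, R = ∂B is a nondegenerate convex reflector whose focal function equals p (i.e., sup_{X∈B}(‖X‖ − ⟨X,y⟩) = p(y) for every y ∈ Sⁿ), and R is the unique nondegenerate convex reflector with focal function p. -/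

import Mathlib

open scoped InnerProductSpace ENNReal
open Metric Set

noncomputable section

/-- Euclidean space `ℝ^{n+1}`. -/
abbrev E (n : ℕ) : Type := EuclideanSpace ℝ (Fin (n + 1))

/-- The unit sphere `Sⁿ` centered at the origin in `ℝ^{n+1}`. -/
def sph (n : ℕ) : Set (E n) := Metric.sphere (0 : E n) 1

/-- `B` is the convex body of a nondegenerate convex reflector: `B` is the intersection of the
solid confocal paraboloids `{X : ‖X‖ - ⟪X,y⟫ ≤ p̃ y}` for some `p̃ : Sⁿ → (0,∞]`
(encoded via `ENNReal`), `B` is compact and the origin is an interior point of `B`.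
The reflector itself is `R = frontier B`. -/
def IsReflectorBody (n : ℕ) (B : Set (E n)) : Prop :=
  IsCompact B ∧ (0 : E n) ∈ interior B ∧
    ∃ pt : E n → ℝ≥0∞, (∀ y ∈ sph n, 0 < pt y) ∧
      B = {X : E n | ∀ y ∈ sph n, ENNReal.ofReal (‖X‖ - ⟪X, y⟫_ℝ) ≤ pt y}

/-- The focal function `p(y) = sup_{X ∈ B} (‖X‖ - ⟪X, y⟫)` of the reflector `∂B`. -/
def focal (n : ℕ) (B : Set (E n)) (y : E n) : ℝ :=
  sSup ((fun X => ‖X‖ - ⟪X, y⟫_ℝ) '' B)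

/-- The radial function `ρ(x) = sup {λ ≥ 0 : λ x ∈ B}`. -/
def radial (n : ℕ) (B : Set (E n)) (x : E n) : ℝ :=
  sSup {l : ℝ | 0 ≤ l ∧ l • x ∈ B}

/-- The support function `h(U) = sup_{X ∈ B} ⟪X, U⟫`. -/
def suppFn (n : ℕ) (B : Set (E n)) (U : E n) : ℝ :=
  sSup ((fun X => ⟪X, U⟫_ℝ) '' B)

/-- The extended focal function `P(Y) = sup_{X ∈ B} (‖X‖‖Y‖ - ⟪X, Y⟫)` on all of `ℝ^{n+1}`. -/
def extFocal (n : ℕ) (B : Set (E n)) (Y : E n) : ℝ :=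
  sSup ((fun X => ‖X‖ * ‖Y‖ - ⟪X, Y⟫_ℝ) '' B)

/-- The directrix `D(R) = {X - ‖X‖y : X ∈ R, y ∈ Sⁿ, ‖X‖ - ⟪X,y⟫ = p(y)}` of the
reflector `R = frontier B`. -/
def directrix (n : ℕ) (B : Set (E n)) : Set (E n) :=
  {Z : E n | ∃ X ∈ frontier B, ∃ y ∈ sph n,
    ‖X‖ - ⟪X, y⟫_ℝ = focal n B y ∧ Z = X - ‖X‖ • y}

open Filter Topology

/-- Gordan alternative combined with Caratheodory. -/
lemma gordan_car {n : ℕ} (T : Set (E n)) (hT : T.Finite) (v0 X0 : E n)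
    (hX : ∀ v ∈ T, 0 < ⟪v, X0⟫_ℝ)
    (hno : ¬ ∃ d : E n, (∀ v ∈ T, ⟪d, v⟫_ℝ < 0) ∧ 0 < ⟪d, v0⟫_ℝ) :
    ∃ (k : ℕ) (u : Fin k → E n) (a : Fin k → ℝ), (∀ i, u i ∈ T) ∧ (∀ i, 0 ≤ a i) ∧
      v0 = ∑ i, a i • u i ∧ LinearIndependent ℝ u := by
  have h0 : (0 : E n) ∈ convexHull ℝ (insert (-v0) T) := by
    by_contra h
    have hc : IsCompact (convexHull ℝ (insert (-v0) T)) :=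
      (hT.insert (-v0)).isCompact_convexHull (𝕜 := ℝ)
    obtain ⟨f, c, hf, hc0⟩ := geometric_hahn_banach_closed_point
      (convex_convexHull ℝ (insert (-v0) T)) hc.isClosed h
    apply hno
    have key : ∀ v, ⟪(InnerProductSpace.toDual ℝ (E n)).symm f, v⟫_ℝ = f v := fun v => by simp
    rw [map_zero] at hc0
    refine ⟨(InnerProductSpace.toDual ℝ (E n)).symm f, ?_, ?_⟩
    · intro v hv
      rw [key]
      exact (hf v (subset_convexHull ℝ _ (mem_insert_of_mem _ hv))).trans hc0
    · rw [key]
      have := (hf (-v0) (subset_convexHull ℝ _ (mem_insert _ _))).trans hc0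
      rw [map_neg] at this
      linarith
  obtain ⟨ι, hι, z, w, hz, haff, hw, hw1, hsum⟩ := eq_pos_convex_span_of_mem_convexHull h0
  classical
  have hj : ∃ j0, z j0 = -v0 := by
    by_contra hcon
    push Not at hcon
    have hzT : ∀ j, z j ∈ T := fun j =>
      (mem_insert_iff.1 (hz (mem_range_self j))).resolve_left (hcon j)
    have h1 : ⟪∑ i, w i • z i, X0⟫_ℝ = ∑ i, w i * ⟪z i, X0⟫_ℝ := by
      rw [sum_inner]
      simp [inner_smul_left]
    rw [hsum, inner_zero_left] at h1
    have hne : (Finset.univ : Finset ι).Nonempty := by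
      by_contra hemp
      rw [Finset.not_nonempty_iff_eq_empty] at hemp
      rw [hemp] at hw1
      simp at hw1
    have := Finset.sum_pos (fun i _ => mul_pos (hw i) (hX _ (hzT i))) hne
    linarith
  obtain ⟨j0, hj0⟩ := hj
  have hinj := haff.injective
  have hzT : ∀ j, j ≠ j0 → z j ∈ T := fun j hj =>
    (mem_insert_iff.1 (hz (mem_range_self j))).resolve_left
      (fun h => hj (hinj (h.trans hj0.symm)))
  have hLI : LinearIndependent ℝ (fun j : {j // j ≠ j0} => z j) := by
    rw [Fintype.linearIndependent_iff]
    intro c hc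
    rw [affineIndependent_iff] at haff
    let c' : ι → ℝ := fun j => if h : j ≠ j0 then c ⟨j, h⟩ else 0
    have hc'0 : c' j0 = 0 := by simp [c']
    have hc'v : ∀ j : {j // j ≠ j0}, c' j = c j := fun j => by simp [c', j.2]
    have hc' : ∑ j, c' j • z j = 0 := by
      rw [Fintype.sum_eq_add_sum_subtype_ne _ j0, hc'0, zero_smul, zero_add, ← hc]
      exact Finset.sum_congr rfl fun j _ => by rw [hc'v]
    have h2 := haff Finset.univ (fun j => c' j - (∑ i, c' i) * w j)
      (by rw [Finset.sum_sub_distrib, ← Finset.mul_sum, hw1]; ring)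
      (by
        simp only [sub_smul, mul_smul]
        rw [Finset.sum_sub_distrib, ← Finset.smul_sum, hsum, hc']; simp)
    have h3 := h2 j0 (Finset.mem_univ _)
    simp only [hc'0, zero_sub, neg_eq_zero, mul_eq_zero, (hw j0).ne', or_false] at h3
    intro j
    have h4 := h2 j (Finset.mem_univ _)
    rw [h3, hc'v] at h4
    simpa using h4
  have hv0 : v0 = ∑ j : {j // j ≠ j0}, (w j / w j0) • z j := by
    rw [Fintype.sum_eq_add_sum_subtype_ne _ j0, hj0] at hsum
    have h5 : ∑ j : {j // j ≠ j0}, w j • z j = w j0 • v0 := by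
      rw [smul_neg] at hsum
      exact (neg_add_eq_zero.1 hsum).symm
    have h6 : ∑ j : {j // j ≠ j0}, (w j / w j0) • z j
        = (w j0)⁻¹ • ∑ j : {j // j ≠ j0}, w j • z j := by
      rw [Finset.smul_sum]
      exact Finset.sum_congr rfl fun j _ => by rw [smul_smul]; congr 1; field_simp
    rw [h6, h5, smul_smul, inv_mul_cancel₀ (hw j0).ne', one_smul]
  let e := (Fintype.equivFin {j // j ≠ j0}).symm
  refine ⟨_, fun i => z (e i), fun i => w (e i) / w j0, fun i => hzT _ (e i).2,
    fun i => (div_pos (hw _) (hw _)).le, ?_, ?_⟩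
  · rw [hv0]
    exact (Equiv.sum_comp e (fun j : {j // j ≠ j0} => (w j / w j0) • z j)).symm
  · exact hLI.comp e e.injective

/-- The finite step. -/
lemma finite_step {n : ℕ} (p : E n → ℝ)
    (hpos : ∀ y ∈ sph n, 0 < p y)
    (hineq : ∀ x y : E n, x ∈ sph n → y ∈ sph n →
      ∀ (k : ℕ) (ys : Fin k → E n) (a : Fin k → ℝ),
        (∀ i, ys i ∈ sph n) → (∀ i, 0 ≤ a i) → 0 < ∑ i, a i →
        x - y = ∑ i, a i • (x - ys i) →
        LinearIndependent ℝ (fun i => x - ys i) →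
        p y ≤ ∑ i, a i * p (ys i))
    (F : Finset (E n)) (hF : ∀ y ∈ F, y ∈ sph n)
    (K : Set (E n)) (hK : K = {X : E n | ∀ y ∈ F, ‖X‖ - ⟪X, y⟫_ℝ ≤ p y})
    (hKc : IsCompact K) (y0 : E n) (hy0 : y0 ∈ sph n) :
    ∃ X ∈ K, p y0 ≤ ‖X‖ - ⟪X, y0⟫_ℝ := by
  have hns : ∀ y ∈ sph n, ‖y‖ = 1 := fun y hy => by simpa [sph] using hy
  have hKne : K.Nonempty := ⟨0, by rw [hK]; intro y hy; simpa using (hpos y (hF y hy)).le⟩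
  obtain ⟨X0, hX0, hmax⟩ := hKc.exists_isMaxOn hKne
    (f := fun X => ‖X‖ - ⟪X, y0⟫_ℝ) (by fun_prop)
  have hmax' : ∀ X ∈ K, ‖X‖ - ⟪X, y0⟫_ℝ ≤ ‖X0‖ - ⟪X0, y0⟫_ℝ := fun X hX => hmax hX
  refine ⟨X0, hX0, ?_⟩
  have hX0K := hX0
  rw [hK] at hX0K
  -- positivity of the maximum
  have hfpos : 0 < ‖X0‖ - ⟪X0, y0⟫_ℝ := by
    have h1 : ∃ ε : ℝ, 0 < ε ∧ ∀ y ∈ F, 2 * ε ≤ p y := by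
      have : ∀ᶠ ε in 𝓝[>] (0 : ℝ), ∀ y ∈ F, 2 * ε ≤ p y := by
        rw [Finset.eventually_all]
        intro y hy
        have ht : Tendsto (fun ε : ℝ => 2 * ε) (𝓝[>] 0) (𝓝 0) := by
          have : Continuous (fun ε : ℝ => 2 * ε) := by fun_prop
          simpa using (this.tendsto 0).mono_left nhdsWithin_le_nhds
        exact (ht.eventually_lt_const (hpos y (hF y hy))).mono fun _ h => h.le
      obtain ⟨ε, h1, h2⟩ := (this.and self_mem_nhdsWithin).exists
      exact ⟨ε, h2, h1⟩
    obtain ⟨ε, hε, h⟩ := h1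
    have hn : ‖-(ε • y0)‖ = ε := by
      rw [norm_neg, norm_smul, hns y0 hy0, Real.norm_of_nonneg hε.le, mul_one]
    have h2 := hmax' (-(ε • y0)) (by
      rw [hK]
      intro y hy
      refine le_trans ?_ (h y hy)
      have := abs_real_inner_le_norm (-(ε • y0)) y
      rw [hn, hns y (hF y hy)] at this
      rw [hn]
      linarith [(abs_le.1 this).1])
    rw [hn, inner_neg_left, real_inner_smul_left, real_inner_self_eq_norm_sq, hns y0 hy0] at h2
    linarith
  have hX0ne : X0 ≠ 0 := by
    rintro rfl
    simp at hfpos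
  have hr : 0 < ‖X0‖ := norm_pos_iff.2 hX0ne
  set x : E n := ‖X0‖⁻¹ • X0 with hx
  have hxn : ‖x‖ = 1 := by
    rw [hx, norm_smul, norm_inv, norm_norm, inv_mul_cancel₀ hr.ne']
  have hxs : x ∈ sph n := by simpa [sph] using hxn
  have hX0x : ∀ y, ⟪x - y, X0⟫_ℝ = ‖X0‖ - ⟪X0, y⟫_ℝ := by
    intro y
    rw [inner_sub_left, hx, real_inner_smul_left, real_inner_self_eq_norm_sq,
      real_inner_comm X0 y]
    field_simp
  have hXx : ‖X0‖ • x = X0 := by rw [hx, smul_smul, mul_inv_cancel₀ hr.ne', one_smul]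
  let A : Set (E n) := {y | y ∈ F ∧ ‖X0‖ - ⟪X0, y⟫_ℝ = p y}
  have hAfin : A.Finite := F.finite_toSet.subset fun y hy => hy.1
  obtain ⟨k, u, a, hu, ha, hv, hLI⟩ := gordan_car ((fun y => x - y) '' A) (hAfin.image _)
    (x - y0) X0
    (by
      rintro _ ⟨y, hy, rfl⟩
      change 0 < ⟪x - y, X0⟫_ℝ
      rw [hX0x, hy.2]
      exact hpos y (hF y hy.1))
    (by
      rintro ⟨d, hd, hd0⟩
      have hlow : ∀ t : ℝ, ‖X0‖ + t * ⟪d, x⟫_ℝ ≤ ‖X0 + t • d‖ := by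
        intro t
        have := real_inner_le_norm (X0 + t • d) x
        rw [hxn, mul_one, inner_add_left, real_inner_smul_left] at this
        have h2 : ⟪X0, x⟫_ℝ = ‖X0‖ := by
          rw [hx, real_inner_smul_right, real_inner_self_eq_norm_sq]; field_simp
        linarith
      have hupp : ∀ t : ℝ, ‖X0 + t • d‖ ≤
          ‖X0‖ + t * ⟪d, x⟫_ℝ + t * (t * (‖d‖ ^ 2 / (2 * ‖X0‖))) := by
        intro t
        have h1 : ‖X0 + t • d‖ ^ 2 = ‖X0‖ ^ 2 + 2 * (t * (‖X0‖ * ⟪d, x⟫_ℝ)) + t ^ 2 * ‖d‖ ^ 2 := by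
          have h3 : ‖X0‖ * ⟪d, x⟫_ℝ = ⟪X0, d⟫_ℝ := by
            rw [← real_inner_smul_right, hXx, real_inner_comm]
          rw [norm_add_sq_real, real_inner_smul_right, norm_smul, mul_pow, Real.norm_eq_abs,
            sq_abs, h3]
        have h2 : ‖X0‖ + t * ⟪d, x⟫_ℝ + t * (t * (‖d‖ ^ 2 / (2 * ‖X0‖)))
            = (‖X0 + t • d‖ ^ 2 + ‖X0‖ ^ 2) / (2 * ‖X0‖) := by
          rw [h1]; field_simp; ring
        rw [h2, le_div_iff₀ (by positivity)]
        nlinarith [sq_nonneg (‖X0 + t • d‖ - ‖X0‖)]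
      have hev : ∀ᶠ t in 𝓝[>] (0 : ℝ), ∀ y ∈ F, ‖X0 + t • d‖ - ⟪X0 + t • d, y⟫_ℝ ≤ p y := by
        rw [Finset.eventually_all]
        intro y hy
        by_cases hact : ‖X0‖ - ⟪X0, y⟫_ℝ = p y
        · have hneg := hd (x - y) ⟨y, ⟨hy, hact⟩, rfl⟩
          have ht : Tendsto (fun t : ℝ => ⟪d, x - y⟫_ℝ + t * (‖d‖ ^ 2 / (2 * ‖X0‖)))
              (𝓝[>] 0) (𝓝 ⟪d, x - y⟫_ℝ) := by
            have : Continuous (fun t : ℝ => ⟪d, x - y⟫_ℝ + t * (‖d‖ ^ 2 / (2 * ‖X0‖))) := by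
              fun_prop
            simpa using (this.tendsto 0).mono_left nhdsWithin_le_nhds
          filter_upwards [ht.eventually_lt_const hneg, self_mem_nhdsWithin] with t h1 h2
          have h2' : 0 < t := h2
          have h3 := mul_neg_of_pos_of_neg h2' h1
          have h4 := hupp t
          rw [inner_sub_right] at h3
          rw [inner_add_left, real_inner_smul_left]
          nlinarith
        · have hlt := lt_of_le_of_ne (hX0K y hy) hact
          have ht : Tendsto (fun t : ℝ => ‖X0 + t • d‖ - ⟪X0 + t • d, y⟫_ℝ)
              (𝓝[>] 0) (𝓝 (‖X0‖ - ⟪X0, y⟫_ℝ)) := by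
            have : Continuous (fun t : ℝ => ‖X0 + t • d‖ - ⟪X0 + t • d, y⟫_ℝ) := by
              fun_prop
            simpa using (this.tendsto 0).mono_left nhdsWithin_le_nhds
          exact (ht.eventually_lt_const hlt).mono fun _ h => h.le
      obtain ⟨t, h1, h2⟩ := (hev.and self_mem_nhdsWithin).exists
      have h2' : 0 < t := h2
      have h3 := hmax' (X0 + t • d) (by rw [hK]; exact h1)
      have h4 := hlow t
      have h5 := mul_pos h2' hd0
      rw [inner_sub_right] at h5
      rw [inner_add_left, real_inner_smul_left] at h3
      nlinarith)
  choose ys hys hysu using hu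
  have hu' : u = fun i => x - ys i := funext fun i => (hysu i).symm
  subst hu'
  have hvne : x - y0 ≠ 0 := by
    intro h
    have := hX0x y0
    rw [h, inner_zero_left] at this
    linarith
  have hsumpos : 0 < ∑ i, a i := by
    refine lt_of_le_of_ne (Finset.sum_nonneg fun i _ => ha i) fun h => hvne ?_
    have := (Finset.sum_eq_zero_iff_of_nonneg (fun i _ => ha i)).1 h.symm
    rw [hv]
    exact Finset.sum_eq_zero fun i hi => by rw [this i hi, zero_smul]
  have hfin := hineq x y0 hxs hy0 k ys a (fun i => hF _ (hys i).1) ha hsumpos hv hLI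
  refine hfin.trans (le_of_eq ?_)
  rw [← hX0x y0, hv, sum_inner]
  refine Finset.sum_congr rfl fun i _ => ?_
  rw [real_inner_smul_left, hX0x, (hys i).2]

/-- Minkowski-type theorem, sufficiency: If `p` is positive and bounded on `Sⁿ`
and satisfies the Minkowski-type inequalities, then
`B = {X : ‖X‖ - ⟪X,y⟫ ≤ p(y) for all y ∈ Sⁿ}` is compact with the origin in its interior,
`R = ∂B` is a nondegenerate convex reflector with focal function `p`, and it is the unique
such reflector. -/
theorem statement9 (n : ℕ) (hn : 1 ≤ n) (p : E n → ℝ)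
    (hpos : ∀ y ∈ sph n, 0 < p y)
    (hbdd : ∃ M : ℝ, ∀ y ∈ sph n, p y ≤ M)
    (hineq : ∀ x y : E n, x ∈ sph n → y ∈ sph n →
      ∀ (k : ℕ) (ys : Fin k → E n) (a : Fin k → ℝ),
        (∀ i, ys i ∈ sph n) → (∀ i, 0 ≤ a i) → 0 < ∑ i, a i →
        x - y = ∑ i, a i • (x - ys i) →
        LinearIndependent ℝ (fun i => x - ys i) →
        p y ≤ ∑ i, a i * p (ys i))
    (B : Set (E n)) (hBdef : B = {X : E n | ∀ y ∈ sph n, ‖X‖ - ⟪X, y⟫_ℝ ≤ p y}) :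
    IsCompact B ∧ (0 : E n) ∈ interior B ∧ IsReflectorBody n B ∧
    (∀ y ∈ sph n, focal n B y = p y) ∧
    (∀ B' : Set (E n), IsReflectorBody n B' →
      (∀ y ∈ sph n, focal n B' y = p y) → B' = B) := by
  classical
  have hns : ∀ y ∈ sph n, ‖y‖ = 1 := fun y hy => by simpa [sph] using hy
  obtain ⟨e, he⟩ : ∃ e : E n, e ∈ sph n :=
    ⟨EuclideanSpace.single 0 1, by simp [sph]⟩
  have hne : -e ∈ sph n := by simpa [sph] using he
  let S : E n → Set (E n) := fun y => {X | ‖X‖ - ⟪X, y⟫_ℝ ≤ p y}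
  have hScl : ∀ y, IsClosed (S y) := fun y =>
    isClosed_le (by fun_prop) continuous_const
  let R : ℝ := p e + p (-e)
  have hR : ∀ X : E n, X ∈ S e → X ∈ S (-e) → ‖X‖ ≤ R := by
    intro X h1 h2
    have h1' : ‖X‖ - ⟪X, e⟫_ℝ ≤ p e := h1
    have h2' : ‖X‖ - ⟪X, -e⟫_ℝ ≤ p (-e) := h2
    rw [inner_neg_right] at h2'
    have := norm_nonneg X
    change ‖X‖ ≤ p e + p (-e)
    linarith
  have hcomp : ∀ C : Set (E n), IsClosed C → C ⊆ S e → C ⊆ S (-e) → IsCompact C := by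
    intro C hC h1 h2
    refine (isCompact_closedBall (0 : E n) R).of_isClosed_subset hC fun X hX => ?_
    rw [mem_closedBall_zero_iff]
    exact hR X (h1 hX) (h2 hX)
  have hBS : ∀ X, X ∈ B ↔ ∀ y ∈ sph n, X ∈ S y := fun X => by rw [hBdef]; rfl
  have hBcl : IsClosed B := by
    have : B = ⋂ y ∈ sph n, S y := by
      ext X
      rw [hBS, mem_iInter₂]
    rw [this]
    exact isClosed_biInter fun y _ => hScl y
  have hBc : IsCompact B := hcomp B hBcl (fun X hX => (hBS X).1 hX e he)
    (fun X hX => (hBS X).1 hX _ hne)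
  have hatt : ∀ y0 ∈ sph n, ∃ X ∈ B, p y0 = ‖X‖ - ⟪X, y0⟫_ℝ := by
    intro y0 hy0
    let K0 : Set (E n) := S e ∩ S (-e) ∩ {X | p y0 ≤ ‖X‖ - ⟪X, y0⟫_ℝ}
    have hK0 : IsCompact K0 := hcomp K0
      (((hScl e).inter (hScl (-e))).inter (isClosed_le continuous_const (by fun_prop)))
      (fun X hX => hX.1.1) (fun X hX => hX.1.2)
    obtain ⟨X, hX, hX'⟩ := hK0.inter_iInter_nonempty (fun y : sph n => S y)
      (fun y => hScl y) (by
        intro G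
        let F : Finset (E n) := insert e (insert (-e) (G.image Subtype.val))
        have hF : ∀ y ∈ F, y ∈ sph n := by
          intro y hy
          simp only [F, Finset.mem_insert, Finset.mem_image] at hy
          rcases hy with rfl | rfl | ⟨g, _, rfl⟩
          · exact he
          · exact hne
          · exact g.2
        have heF : e ∈ F := by simp [F]
        have hneF : -e ∈ F := by simp [F]
        obtain ⟨X, hXK, hX⟩ := finite_step p hpos hineq F hF _ rfl
          (hcomp _ (by
            have : {X : E n | ∀ y ∈ F, ‖X‖ - ⟪X, y⟫_ℝ ≤ p y} = ⋂ y ∈ F, S y := by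
              ext X
              rw [mem_iInter₂]
              rfl
            rw [this]
            exact isClosed_biInter fun y _ => hScl y)
            (fun X hX => hX e heF) (fun X hX => hX _ hneF)) y0 hy0
        refine ⟨X, ⟨⟨hXK e heF, hXK _ hneF⟩, hX⟩, ?_⟩
        rw [mem_iInter₂]
        intro g hg
        exact hXK g (by
          simp only [F, Finset.mem_insert, Finset.mem_image]
          exact Or.inr (Or.inr ⟨g, hg, rfl⟩)))
    rw [mem_iInter] at hX'
    have hXB : X ∈ B := (hBS X).2 fun y hy => hX' ⟨y, hy⟩
    exact ⟨X, hXB, le_antisymm hX.2 ((hBS X).1 hXB y0 hy0)⟩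
  have hBR : ∀ X ∈ B, ‖X‖ ≤ R := fun X hX => hR X ((hBS X).1 hX e he) ((hBS X).1 hX _ hne)
  have hR0 : 0 ≤ R := le_of_lt <| add_pos (hpos e he) (hpos _ hne)
  have hcont : ContinuousOn p (sph n) := by
    have hle : ∀ y ∈ sph n, ∀ y' ∈ sph n, p y ≤ p y' + R * dist y y' := by
      intro y hy y' hy'
      obtain ⟨X, hX, hXe⟩ := hatt y hy
      have h1 : ‖X‖ - ⟪X, y'⟫_ℝ ≤ p y' := (hBS X).1 hX y' hy'
      have h2 := real_inner_le_norm X (y' - y)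
      rw [inner_sub_right, ← dist_eq_norm, dist_comm] at h2
      have h3 := mul_le_mul_of_nonneg_right (hBR X hX) (dist_nonneg (x := y) (y := y'))
      linarith
    exact (LipschitzOnWith.of_le_add_mul ⟨R, hR0⟩ hle).continuousOn
  have hsc : IsCompact (sph n) := isCompact_sphere _ _
  obtain ⟨ym, hym, hmin⟩ := hsc.exists_isMinOn ⟨e, he⟩ hcont
  have hc0 := hpos ym hym
  have hzeroInt : (0 : E n) ∈ interior B := by
    rw [mem_interior_iff_mem_nhds]
    refine Filter.mem_of_superset (Metric.ball_mem_nhds 0 (half_pos hc0)) fun X hX => ?_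
    rw [mem_ball_zero_iff] at hX
    rw [hBS]
    intro y hy
    have h1 : p ym ≤ p y := hmin hy
    have h2 := abs_real_inner_le_norm X y
    rw [hns y hy, mul_one] at h2
    change ‖X‖ - ⟪X, y⟫_ℝ ≤ p y
    linarith [(abs_le.1 h2).1]
  refine ⟨hBc, hzeroInt, ⟨hBc, hzeroInt, fun y => ENNReal.ofReal (p y), ?_, ?_⟩, ?_, ?_⟩
  · intro y hy
    exact ENNReal.ofReal_pos.2 (hpos y hy)
  · rw [hBdef]
    ext X
    simp only [mem_ofPred_eq]
    refine forall₂_congr fun y hy => ?_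
    rw [ENNReal.ofReal_le_ofReal_iff (hpos y hy).le]
  · intro y hy
    obtain ⟨X, hX, hXe⟩ := hatt y hy
    refine IsGreatest.csSup_eq ⟨⟨X, hX, hXe.symm⟩, ?_⟩
    rintro _ ⟨Z, hZ, rfl⟩
    exact (hBS Z).1 hZ y hy
  · rintro B' ⟨hB'c, hB'0, pt, hpt, hB'⟩ hfoc
    apply Subset.antisymm
    · intro X hX
      rw [hBS]
      intro y hy
      change ‖X‖ - ⟪X, y⟫_ℝ ≤ p y
      rw [← hfoc y hy]
      refine le_csSup ?_ ⟨X, hX, rfl⟩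
      exact (hB'c.image (by fun_prop)).bddAbove
    · intro X hX
      rw [hB']
      intro y hy
      by_cases htop : pt y = ∞
      · rw [htop]; exact le_top
      · rw [ENNReal.ofReal_le_iff_le_toReal htop]
        refine ((hBS X).1 hX y hy).trans ?_
        rw [← hfoc y hy]
        refine csSup_le ⟨_, ⟨0, interior_subset hB'0, rfl⟩⟩ ?_
        rintro _ ⟨Z, hZ, rfl⟩
        rw [hB'] at hZ
        exact (ENNReal.ofReal_le_iff_le_toReal htop).1 (hZ y hy)
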